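/- Let n, k be positive integers with n even and n > 2k + 4. Let V be an F_2-vector space of dimension n, let h : V → F_2, and let W ⊆ V be an M-subspace of h with dim W = n/2 such that every M-subspace of h of dimension at least 2 is contained in W. Let W̃ ⊆ V be a subspace with V = W ⊕ W̃, and let L : V → V be an F_2-linear bijection with L(W̃) = W. For z ∈ F_{2^k} set f^{(z)} = h if Tr_1^k(z) = 0 and f^{(z)} = h ∘ L if Tr_1^k(z) = 1, and define f : V × F_{2^k} × F_{2^k} → F_2 by f(x,y,z) = f^{(z)}(x) + Tr_1^k(yz). Then every M-subspace U of f satisfies dim U < n/2 + k. -/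

import Mathlib

/-- The second-order derivative `D_a D_b f (x) = f x + f (x+a) + f (x+b) + f (x+a+b)`. -/
def D2 {V : Type*} [AddCommGroup V] (f : V → ZMod 2) (a b x : V) : ZMod 2 :=
  f x + f (x + a) + f (x + b) + f (x + a + b)

/-- An `M`-subspace of `f` : a subspace on which all second-order derivatives of `f` vanish. -/
def IsMSubspace {V : Type*} [AddCommGroup V] [Module (ZMod 2) V] (f : V → ZMod 2)
    (U : Submodule (ZMod 2) V) : Prop :=
  ∀ a ∈ U, ∀ b ∈ U, ∀ x, D2 f a b x = 0

/-- The absolute trace map of `F_{2^k}`. -/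
noncomputable def Tr (k : ℕ) (x : GaloisField 2 k) : ZMod 2 :=
  Algebra.trace (ZMod 2) (GaloisField 2 k) x

/-- Proposition 3.4: starting from a function `h` whose nontrivial `M`-subspaces are all
contained in a unique `M`-subspace `W` of dimension `n/2`, and mixing `h` with `h ∘ L`
(where `L` maps a complement of `W` onto `W`) according to `Tr(z)`, the resulting
generalized Maiorana–McFarland function has no `M`-subspace of dimension `n/2 + k`,
hence is not in the completed Maiorana–McFarland class. -/
theorem GMM_outside_MM
    (n k : ℕ) (hn : 0 < n) (hk : 0 < k) (hneven : Even n) (hnk : n > 2 * k + 4)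
    (V : Type*) [AddCommGroup V] [Module (ZMod 2) V] [FiniteDimensional (ZMod 2) V]
    (hdim : Module.finrank (ZMod 2) V = n)
    (h : V → ZMod 2)
    (W : Submodule (ZMod 2) V) (hW : IsMSubspace h W)
    (hWdim : Module.finrank (ZMod 2) W = n / 2)
    (hWmax : ∀ U : Submodule (ZMod 2) V,
      IsMSubspace h U → 2 ≤ Module.finrank (ZMod 2) U → U ≤ W)
    (W' : Submodule (ZMod 2) V) (hcompl : IsCompl W W')
    (L : V ≃ₗ[ZMod 2] V) (hL : W'.map (L : V →ₗ[ZMod 2] V) = W)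
    (f : V × GaloisField 2 k × GaloisField 2 k → ZMod 2)
    (hf : ∀ (x : V) (y z : GaloisField 2 k),
      f (x, y, z) = (if Tr k z = 0 then h x else h (L x)) + Tr k (y * z)) :
    ∀ U : Submodule (ZMod 2) (V × GaloisField 2 k × GaloisField 2 k),
      IsMSubspace f U → Module.finrank (ZMod 2) U < n / 2 + k := by
  intro U hU
  set A : Submodule (ZMod 2) V :=
    U.comap (LinearMap.inl (ZMod 2) V (GaloisField 2 k × GaloisField 2 k)) with hA
  have key : ∀ a ∈ A, ∀ b ∈ A, ∀ x, ∀ z : GaloisField 2 k,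
      D2 (fun x => if Tr k z = 0 then h x else h (L x)) a b x = 0 := by
    intro a ha b hb x z
    have h1 := hU (a, 0, 0) ha (b, 0, 0) hb (x, 0, z)
    have h0 : Tr k 0 = 0 := by simp [Tr]
    simpa [D2, hf, h0] using h1
  have hAh : IsMSubspace h A := by
    intro a ha b hb x
    have h0 : Tr k 0 = 0 := by simp [Tr]
    simpa [h0] using key a ha b hb x 0
  obtain ⟨z, hz⟩ : ∃ z : GaloisField 2 k, Tr k z ≠ 0 := by
    obtain ⟨z, hz⟩ := Algebra.trace_surjective (ZMod 2) (GaloisField 2 k) 1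
    exact ⟨z, by rw [Tr, hz]; exact one_ne_zero⟩
  have hAL : IsMSubspace h (A.map (L : V →ₗ[ZMod 2] V)) := by
    rintro _ ⟨a, ha, rfl⟩ _ ⟨b, hb, rfl⟩ x
    have h1 := key a ha b hb (L.symm x) z
    simpa [D2, hz] using h1
  have hA1 : Module.finrank (ZMod 2) A < 2 := by
    by_contra! hc
    have i1 := hWmax A hAh hc
    have i2 := hWmax _ hAL (by rw [LinearEquiv.finrank_map_eq]; exact hc)
    have i3 : A ≤ W' := by
      rw [← hL] at i2
      exact (Submodule.map_le_map_iff_of_injective L.injective _ _).1 i2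
    have i4 : A = ⊥ := le_bot_iff.1 (hcompl.disjoint i1 i3)
    rw [i4, finrank_bot] at hc
    omega
  set φ := (LinearMap.snd (ZMod 2) V (GaloisField 2 k × GaloisField 2 k)).domRestrict U with hφ
  have hr := LinearMap.finrank_range_add_finrank_ker φ
  have hr1 : Module.finrank (ZMod 2) (LinearMap.range φ) ≤ k + k := by
    refine (Submodule.finrank_le _).trans ?_
    rw [Module.finrank_prod, GaloisField.finrank 2 hk.ne']
  have hker : Module.finrank (ZMod 2) (LinearMap.ker φ) ≤ Module.finrank (ZMod 2) A := by
    have hm : ∀ u : LinearMap.ker φ, ((u : U) : V × GaloisField 2 k × GaloisField 2 k).2 = 0 :=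
      fun u => u.2
    let ψ : LinearMap.ker φ →ₗ[ZMod 2] A := LinearMap.codRestrict A
      ((LinearMap.fst (ZMod 2) V (GaloisField 2 k × GaloisField 2 k)) ∘ₗ U.subtype ∘ₗ
        (LinearMap.ker φ).subtype) (by
          intro u
          have h2 := u.1.2
          have h3 := hm u
          show ((u.1.1.1, 0) : V × GaloisField 2 k × GaloisField 2 k) ∈ U
          rw [← h3]
          exact h2)
    refine LinearMap.finrank_le_finrank_of_injective (f := ψ) ?_
    intro u v huv
    apply Subtype.ext
    apply Subtype.ext
    refine Prod.ext ?_ ((hm u).trans (hm v).symm)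
    exact congrArg Subtype.val huv
  omega
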